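/- Let n : ℕ and let ⟨·,·⟩ denote the Minkowski bilinear form on ℝ^{n+1}. Suppose D, C, N : Fin (n+1) → ℝ satisfy ⟨D,D⟩ = 14, ⟨C,C⟩ = −1, ⟨N,N⟩ = −2, ⟨D,N⟩ = 0, 0 ≤ ⟨D,C⟩ ≤ 3, and ⟨C,N⟩ = t for some integer t ≥ 1. Then t = 1. -/

import Mathlib

/-- The Minkowski (Lorentzian) bilinear form on `ℝ^{n+1}`:
`⟨x, y⟩ = x 0 * y 0 - ∑_{i=1}^{n} x i * y i`. -/
def mink (n : ℕ) (x y : Fin (n + 1) → ℝ) : ℝ :=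
  x 0 * y 0 - ∑ i ∈ Finset.Ioi (0 : Fin (n + 1)), x i * y i

/-!
If `⟨·, ·⟩` is nonpositive on `D^⊥` and `⟨D, D⟩ > 0`, then evaluating it on the vector
`⟨D, D⟩ X - ⟨D, X⟩ D` of `D^⊥` gives the index inequality `⟨D, D⟩ ⟨X, X⟩ ≤ ⟨D, X⟩ ^ 2`.
With `X = C + N` it reads `⟨D, D⟩ (2 ⟨C, N⟩ - 3) ≤ ⟨D, C⟩ ^ 2`, so `⟨D, C⟩ ^ 2 < ⟨D, D⟩` forces
`⟨C, N⟩ < 2`. For the Minkowski form, nonpositivity on the orthogonal complement of a vector of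
positive square is the Cauchy–Schwarz inequality for the space coordinates.
-/

section IndexInequality

variable {R M : Type*} [CommRing R] [LinearOrder R] [IsStrictOrderedRing R]
  [AddCommGroup M] [Module R M] {B : LinearMap.BilinForm R M} {D C N : M}

theorem apply_self_mul_apply_self_le_apply_sq (hB : B.IsSymm)
    (hD : ∀ X, B D X = 0 → B X X ≤ 0) (hDD : 0 < B D D) (X : M) :
    B D D * B X X ≤ B D X ^ 2 := by
  have h_orth : B D (B D D • X - B D X • D) = 0 := by
    simp only [map_sub, map_smul, smul_eq_mul]
    ring
  have h_self : B (B D D • X - B D X • D) (B D D • X - B D X • D) =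
      B D D * (B D D * B X X - B D X ^ 2) := by
    simp only [map_sub, map_smul, LinearMap.sub_apply, LinearMap.smul_apply, smul_eq_mul,
      hB.eq X D]
    ring
  have h_nonpos : B D D * (B D D * B X X - B D X ^ 2) ≤ 0 := h_self ▸ hD _ h_orth
  exact sub_nonpos.mp (nonpos_of_mul_nonpos_right h_nonpos hDD)

theorem apply_lt_two_of_apply_sq_lt (hB : B.IsSymm) (hD : ∀ X, B D X = 0 → B X X ≤ 0)
    (hDC : B D C ^ 2 < B D D) (hCC : B C C = -1) (hNN : B N N = -2) (hDN : B D N = 0) :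
    B C N < 2 := by
  have hDD : 0 < B D D := (sq_nonneg _).trans_lt hDC
  have h_sq : B (C + N) (C + N) = 2 * B C N - 3 := by
    simp only [map_add, LinearMap.add_apply, hB.eq N C, hCC, hNN]
    ring
  have h_deg : B D (C + N) = B D C := by rw [map_add, hDN, add_zero]
  have h_lt : B D D * (2 * B C N - 3) < B D D * 1 :=
    calc B D D * (2 * B C N - 3)
      _ = B D D * B (C + N) (C + N) := by rw [h_sq]
      _ ≤ B D (C + N) ^ 2 := apply_self_mul_apply_self_le_apply_sq hB hD hDD _
      _ = B D C ^ 2 := by rw [h_deg]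
      _ < B D D * 1 := by rwa [mul_one]
  linarith [lt_of_mul_lt_mul_left h_lt hDD.le]

theorem nodal_intersection_one_general {t : ℤ} (hB : B.IsSymm)
    (hD : ∀ X, B D X = 0 → B X X ≤ 0) (hDC : B D C ^ 2 < B D D) (hCC : B C C = -1)
    (hNN : B N N = -2) (hDN : B D N = 0) (hCN : B C N = t) (ht : 1 ≤ t) : t = 1 := by
  have h_lt : (t : R) < 2 := hCN ▸ apply_lt_two_of_apply_sq_lt hB hD hDC hCC hNN hDN
  have : t < 2 := by exact_mod_cast h_lt
  lia

end IndexInequality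

theorem sq_le_sum_sq_of_mul_eq_sum_mul {ι R : Type*} [CommRing R] [LinearOrder R]
    [IsStrictOrderedRing R] {s : Finset ι} {f g : ι → R} {a b : R}
    (ha : ∑ i ∈ s, f i ^ 2 < a ^ 2) (hab : a * b = ∑ i ∈ s, f i * g i) :
    b ^ 2 ≤ ∑ i ∈ s, g i ^ 2 := by
  have ha_pos : 0 < a ^ 2 := (s.sum_nonneg fun i _ ↦ sq_nonneg (f i)).trans_lt ha
  refine le_of_mul_le_mul_left ?_ ha_pos
  calc a ^ 2 * b ^ 2
    _ = (∑ i ∈ s, f i * g i) ^ 2 := by rw [← mul_pow, hab]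
    _ ≤ (∑ i ∈ s, f i ^ 2) * ∑ i ∈ s, g i ^ 2 := s.sum_mul_sq_le_sq_mul_sq f g
    _ ≤ a ^ 2 * ∑ i ∈ s, g i ^ 2 :=
      mul_le_mul_of_nonneg_right ha.le (s.sum_nonneg fun i _ ↦ sq_nonneg (g i))

section Minkowski

variable {n : ℕ}

theorem mink_comm (x y : Fin (n + 1) → ℝ) : mink n x y = mink n y x := by
  simp only [mink, mul_comm]

theorem mink_add_right (x y z : Fin (n + 1) → ℝ) :
    mink n x (y + z) = mink n x y + mink n x z := by
  simp only [mink, Pi.add_apply, mul_add, Finset.sum_add_distrib]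
  ring

theorem mink_smul_right (c : ℝ) (x y : Fin (n + 1) → ℝ) :
    mink n x (c • y) = c * mink n x y := by
  simp only [mink, Pi.smul_apply, smul_eq_mul, mul_sub, Finset.mul_sum, mul_left_comm]

theorem mink_self (x : Fin (n + 1) → ℝ) :
    mink n x x = x 0 ^ 2 - ∑ i ∈ Finset.Ioi 0, x i ^ 2 := by
  simp only [mink, sq]

theorem mink_self_nonpos_of_mink_eq_zero {x y : Fin (n + 1) → ℝ} (hx : 0 < mink n x x)
    (hxy : mink n x y = 0) : mink n y y ≤ 0 := by
  rw [mink_self] at hx ⊢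
  exact sub_nonpos.mpr (sq_le_sum_sq_of_mul_eq_sum_mul (sub_pos.mp hx) (sub_eq_zero.mp hxy))

variable (n) in
/-- The Minkowski form `mink n` bundled as a bilinear form, so that results on abstract bilinear
forms apply to it. -/
def minkForm : LinearMap.BilinForm ℝ (Fin (n + 1) → ℝ) :=
  LinearMap.mk₂ ℝ (mink n)
    (fun x y z ↦ by simp only [mink_comm _ z, mink_add_right])
    (fun c x y ↦ by simp only [mink_comm _ y, mink_smul_right, smul_eq_mul])
    mink_add_right
    mink_smul_right

theorem minkForm_isSymm : (minkForm n).IsSymm := ⟨mink_comm⟩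

end Minkowski

/-- The recurring index-theorem argument: a (−1)-class `C` with `0 ≤ D·C ≤ 3` meets a
nodal class `N` (with `D·N = 0`) in at most one point. -/
theorem nodal_intersection_one (n : ℕ) (D C N : Fin (n + 1) → ℝ) (t : ℤ)
    (hDD : mink n D D = 14) (hCC : mink n C C = -1) (hNN : mink n N N = -2)
    (hDN : mink n D N = 0) (hDC0 : 0 ≤ mink n D C) (hDC3 : mink n D C ≤ 3)
    (hCN : mink n C N = (t : ℝ)) (ht : 1 ≤ t) :
    t = 1 := by
  have hD : ∀ X, minkForm n D X = 0 → minkForm n X X ≤ 0 := fun _ ↦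
    mink_self_nonpos_of_mink_eq_zero (by rw [hDD]; norm_num)
  have hDC : mink n D C ^ 2 < mink n D D := by
    rw [hDD]
    nlinarith
  exact nodal_intersection_one_general minkForm_isSymm hD hDC hCC hNN hDN hCN ht
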